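/- arXiv:1909.05850 — 2 statements merged into one kernel-verified Lean document; each statement's English description precedes it below -/
import Mathlib

section
/- (Quantitative doubly robust bias bound.) Assume η ≤ C_η and that μ_b.bind K_b is absolutely continuous with respect to μ_b with density bounded by C_{S'}. Then for all bounded measurable w' : S → ℝ and q' : S × A → ℝ, | E_D[ψ(s,a,r,s'; w', q')] − ρ | ≤ (1 + γ·√(C_η · C_{S'})) · ‖w' − w‖_{L²(μ_b)} · ‖q' − q‖_{L²(ν_e)}, where ν_e denotes the law of (s,a) with s ~ μ_b and a ~ π_e(s), and ‖·‖_{L²} denotes the corresponding L² norms. -/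
open MeasureTheory ProbabilityTheory
open scoped ENNReal

noncomputable section

variable {S A : Type*} [MeasurableSpace S] [MeasurableSpace A]

/-- `t`-fold composition of a Markov kernel with itself. -/
def kpow {α : Type*} [MeasurableSpace α] (K : Kernel α α) : ℕ → Kernel α α
  | 0 => Kernel.id
  | n + 1 => K ∘ₖ kpow K n

/-- The state-transition kernel induced by a policy `π`. -/
def stateKernel (P : Kernel (S × A) S) (π : Kernel S A) [IsSFiniteKernel π] :
    Kernel S S :=
  P ∘ₖ (Kernel.id ×ₖ π)

/-- The discounted average visitation measure. -/
def dgamma (γ : ℝ) (μe : Measure S) (Ke : Kernel S S) : Measure S :=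
  ENNReal.ofReal (1 - γ) •
    Measure.sum fun t : ℕ => ENNReal.ofReal γ ^ t • μe.bind fun s => kpow Ke t s

/-- The data distribution `D`. -/
def dataLaw (P : Kernel (S × A) S) (R : Kernel (S × A) ℝ) (πb : Kernel S A)
    (μb : Measure S) : Measure (S × A × ℝ × S) :=
  μb.bind fun s => (πb s).bind fun a => (R (s, a)).bind fun r =>
    (P (s, a)).map fun s' => (s, a, r, s')

/-- The DRL estimating function `ψ(s,a,r,s'; w', q')`. -/
def psiDRL (γ : ℝ) (μe : Measure S) (πe : Kernel S A) (η : S → A → ℝ)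
    (w' : S → ℝ) (q' : S → A → ℝ) (x : S × A × ℝ × S) : ℝ :=
  (1 - γ) * (∫ s, (∫ a, q' s a ∂(πe s)) ∂μe) +
    w' x.1 * η x.1 x.2.1 *
      (x.2.2.1 + γ * (∫ a, q' x.2.2.2 a ∂(πe x.2.2.2)) - q' x.1 x.2.1)


lemma dr_integrable {α : Type*} [MeasurableSpace α] {μ : Measure α} [IsFiniteMeasure μ]
    {f : α → ℝ} (hf : Measurable f) {C : ℝ} (hC : ∀ x, |f x| ≤ C) : Integrable f μ :=
  Integrable.of_bound hf.aestronglyMeasurable C (Filter.Eventually.of_forall hC)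

lemma dr_meas {α β : Type*} [MeasurableSpace α] [MeasurableSpace β] (κ : Kernel α β)
    [IsSFiniteKernel κ] {f : α → β → ℝ} (hf : Measurable (Function.uncurry f)) :
    Measurable fun s => ∫ a, f s a ∂(κ s) :=
  (StronglyMeasurable.integral_kernel_prod_right' (κ := κ) hf.stronglyMeasurable).measurable

lemma dr_bound {α : Type*} [MeasurableSpace α] {μ : Measure α} [IsProbabilityMeasure μ]
    {f : α → ℝ} {C : ℝ} (hC : ∀ x, |f x| ≤ C) : |∫ x, f x ∂μ| ≤ C := by
  have := norm_integral_le_of_norm_le_const (μ := μ) (f := f) (C := C)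
    (Filter.Eventually.of_forall hC)
  simpa using this

lemma dr_sq_bound {a C : ℝ} (h : |a| ≤ C) : |a ^ 2| ≤ C ^ 2 := by
  rw [abs_pow]; exact pow_le_pow_left₀ (abs_nonneg _) h 2

lemma dr_mul_bound {a b C D : ℝ} (h : |a| ≤ C) (h' : |b| ≤ D) : |a * b| ≤ C * D := by
  rw [abs_mul]; exact mul_le_mul h h' (abs_nonneg _) ((abs_nonneg _).trans h)

lemma dr_jensen {α : Type*} [MeasurableSpace α] {μ : Measure α} [IsProbabilityMeasure μ]
    {f : α → ℝ} (hf : Measurable f) {C : ℝ} (hC : ∀ x, |f x| ≤ C) :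
    (∫ x, f x ∂μ) ^ 2 ≤ ∫ x, (f x) ^ 2 ∂μ := by
  have h1 : Integrable f μ := dr_integrable hf hC
  have h2 : Integrable (fun x => (f x) ^ 2) μ :=
    dr_integrable (hf.pow_const 2) (fun x => dr_sq_bound (hC x))
  set m := ∫ x, f x ∂μ with hm
  have h3 : 0 ≤ ∫ x, (f x - m) ^ 2 ∂μ := integral_nonneg fun x => sq_nonneg _
  have h4 : ∫ x, (f x - m) ^ 2 ∂μ = ∫ x, (f x) ^ 2 ∂μ - m ^ 2 := by
    have : (fun x => (f x - m) ^ 2) = fun x => ((f x) ^ 2 - (2 * m) * f x) + m ^ 2 := by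
      funext x; ring
    have h5 : Integrable (fun x => (f x) ^ 2 - (2 * m) * f x) μ := h2.sub (h1.const_mul _)
    rw [this, integral_add h5 (integrable_const _),
      integral_sub h2 (h1.const_mul _), integral_const_mul, ← hm]
    simp
    ring
  linarith

lemma dr_cs {α : Type*} [MeasurableSpace α] {μ : Measure α} [IsFiniteMeasure μ]
    {f g : α → ℝ} (hf : Measurable f) {C : ℝ} (hC : ∀ x, |f x| ≤ C)
    (hg : Measurable g) {D : ℝ} (hD : ∀ x, |g x| ≤ D) :
    |∫ x, f x * g x ∂μ| ≤ √(∫ x, (f x) ^ 2 ∂μ) * √(∫ x, (g x) ^ 2 ∂μ) := by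
  have hff : MemLp f (ENNReal.ofReal 2) μ :=
    MemLp.of_bound hf.aestronglyMeasurable C (Filter.Eventually.of_forall hC)
  have hgg : MemLp g (ENNReal.ofReal 2) μ :=
    MemLp.of_bound hg.aestronglyMeasurable D (Filter.Eventually.of_forall hD)
  have := integral_mul_norm_le_Lp_mul_Lq (μ := μ) (f := f) (g := g)
    Real.HolderConjugate.two_two hff hgg
  have h2 : |∫ x, f x * g x ∂μ| ≤ ∫ x, ‖f x‖ * ‖g x‖ ∂μ := by
    have := norm_integral_le_integral_norm (μ := μ) (fun x => f x * g x)
    simpa [norm_mul] using this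
  refine h2.trans (this.trans (le_of_eq ?_))
  simp [Real.sqrt_eq_rpow]

lemma dr_bind {α β : Type*} [MeasurableSpace α] [MeasurableSpace β] (κ : Kernel α β)
    [IsMarkovKernel κ] (μ : Measure α) [IsFiniteMeasure μ]
    {f : β → ℝ} (hf : Measurable f) {C : ℝ} (hC : ∀ x, |f x| ≤ C) :
    ∫ y, f y ∂(μ.bind fun s => κ s) = ∫ x, ∫ y, f y ∂(κ x) ∂μ := by
  have : (μ.bind fun s => κ s) = (μ ⊗ₘ κ).map Prod.snd :=
    (Measure.snd_compProd μ κ).symm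
  rw [this, integral_map measurable_snd.aemeasurable hf.aestronglyMeasurable,
    Measure.integral_compProd]
  exact dr_integrable (hf.comp measurable_snd) (fun x => hC _)

instance dr_stateKernel_markov (P : Kernel (S × A) S) [IsMarkovKernel P] (π : Kernel S A)
    [IsMarkovKernel π] : IsMarkovKernel (stateKernel P π) := by
  unfold stateKernel; infer_instance

lemma dr_stateKernel (P : Kernel (S × A) S) [IsMarkovKernel P] (π : Kernel S A)
    [IsMarkovKernel π] {f : S → ℝ} (hf : Measurable f) {C : ℝ} (hC : ∀ x, |f x| ≤ C) (s : S) :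
    ∫ y, f y ∂(stateKernel P π s) = ∫ a, ∫ y, f y ∂(P (s, a)) ∂(π s) := by
  unfold stateKernel
  have hm : Measurable fun p : S × A => ∫ y, f y ∂(P p) :=
    dr_meas P (f := fun _ y => f y) (hf.comp measurable_snd)
  rw [Kernel.integral_comp, Kernel.prod_apply, Kernel.id_apply, Measure.dirac_prod,
    integral_map (by fun_prop) hm.aestronglyMeasurable]
  exact dr_integrable hf hC

lemma dr_dgamma (γ : ℝ) (μe : Measure S) (K : Kernel S S) :
    dgamma γ μe K = ENNReal.ofReal (1 - γ) • μe
      + ENNReal.ofReal γ • ((dgamma γ μe K).bind fun s => K s) := by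
  have hs : ∀ t : ℕ, (μe.bind fun s => kpow K (t + 1) s)
      = (μe.bind fun s => kpow K t s).bind fun s => K s := by
    intro t
    exact (Measure.comp_assoc (μ := μe) (κ := kpow K t) (η := K)).symm
  have h0 : (μe.bind fun s => kpow K 0 s) = μe := by
    simp [kpow, Kernel.id_apply, Measure.bind_dirac]
  conv_lhs => unfold dgamma
  have hbind : (dgamma γ μe K).bind (fun s => K s) = ENNReal.ofReal (1 - γ) •
      Measure.sum fun t : ℕ => ENNReal.ofReal γ ^ t • μe.bind fun s => kpow K (t + 1) s := by
    unfold dgamma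
    rw [Measure.bind_smul, Measure.bind_sum _ _ K.measurable.aemeasurable]
    congr 2
    funext t
    rw [Measure.bind_smul, hs]
  rw [hbind]
  ext s hsm
  simp only [Measure.add_apply, Measure.smul_apply, Measure.sum_apply _ hsm, smul_eq_mul]
  rw [tsum_eq_zero_add' ENNReal.summable]
  rw [h0, mul_add, pow_zero, one_mul, ← ENNReal.tsum_mul_left, ← ENNReal.tsum_mul_left,
    ← ENNReal.tsum_mul_left]
  congr 1
  refine tsum_congr fun t => ?_
  rw [pow_succ]
  ring

lemma dr_dataLaw (P : Kernel (S × A) S) [IsMarkovKernel P] (R : Kernel (S × A) ℝ)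
    [IsMarkovKernel R] (πb : Kernel S A) [IsMarkovKernel πb]
    (μb : Measure S) [IsProbabilityMeasure μb] :
    dataLaw P R πb μb = ((μb ⊗ₘ πb) ⊗ₘ (R ×ₖ P)).map
      (fun z : (S × A) × (ℝ × S) => (z.1.1, z.1.2, z.2.1, z.2.2)) := by
  have hmp : Measurable (fun z : (S × A) × (ℝ × S) => (z.1.1, z.1.2, z.2.1, z.2.2)) := by
    fun_prop
  -- measurability of the layers
  have e1 : ∀ s a, ((R (s, a)).bind fun r => (P (s, a)).map fun s' => (s, a, r, s'))
      = ((R ×ₖ P) (s, a)).map (fun y : ℝ × S => (s, a, y.1, y.2)) := by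
    intro s a
    have hk : Measurable fun r : ℝ => (P (s, a)).map fun s' : S => (s, a, r, s') := by
      refine Measure.measurable_of_measurable_coe _ fun B hB => ?_
      have : (fun r : ℝ => ((P (s, a)).map fun s' : S => (s, a, r, s')) B)
          = fun r => (P (s, a)) (Prod.mk r ⁻¹' ((fun y : ℝ × S => (s, a, y.1, y.2)) ⁻¹' B)) := by
        funext r
        rw [Measure.map_apply (by fun_prop) hB]; rfl
      rw [this]
      exact measurable_measure_prodMk_left ((by fun_prop :
        Measurable (fun y : ℝ × S => (s, a, y.1, y.2))) hB)
    refine Measure.ext_of_lintegral _ fun f hf => ?_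
    rw [Measure.lintegral_bind hk.aemeasurable hf.aemeasurable,
      lintegral_map hf (by fun_prop), Kernel.prod_apply, lintegral_prod _ (by fun_prop)]
    refine lintegral_congr fun r => ?_
    rw [lintegral_map hf (by fun_prop)]
  unfold dataLaw
  simp_rw [e1]
  let κ2 : Kernel (S × A) (S × A × ℝ × S) :=
    (Kernel.id ×ₖ (R ×ₖ P)).map
      (fun z : (S × A) × (ℝ × S) => (z.1.1, z.1.2, z.2.1, z.2.2))
  have e2 : ∀ s a, ((R ×ₖ P) (s, a)).map (fun y : ℝ × S => (s, a, y.1, y.2)) = κ2 (s, a) := by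
    intro s a
    simp only [κ2]
    rw [Kernel.map_apply _ hmp, Kernel.prod_apply Kernel.id, Kernel.id_apply, Measure.dirac_prod,
      Measure.map_map hmp (by fun_prop)]
    rfl
  simp_rw [e2]
  have hk3 : ∀ s, Measurable fun a => κ2 (s, a) := fun s =>
    κ2.measurable.comp measurable_prodMk_left
  have e3 : ∀ s, ((πb s).bind fun a => κ2 (s, a)) = (κ2 ∘ₖ (Kernel.id ×ₖ πb)) s := by
    intro s
    rw [Kernel.comp_apply, Kernel.prod_apply, Kernel.id_apply, Measure.dirac_prod]
    refine Measure.ext_of_lintegral _ fun f hf => ?_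
    rw [Measure.lintegral_bind (hk3 s).aemeasurable
      hf.aemeasurable, Measure.lintegral_bind κ2.measurable.aemeasurable hf.aemeasurable,
      lintegral_map hf.lintegral_kernel measurable_prodMk_left]
  simp_rw [e3]
  refine Measure.ext_of_lintegral _ fun f hf => ?_
  rw [Measure.lintegral_bind (Kernel.measurable _).aemeasurable hf.aemeasurable,
    lintegral_map hf hmp, Measure.lintegral_compProd (by fun_prop),
    Measure.lintegral_compProd]
  · refine lintegral_congr fun s => ?_
    rw [← e3, Measure.lintegral_bind (hk3 s).aemeasurable
      hf.aemeasurable]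
    refine lintegral_congr fun a => ?_
    rw [← e2, lintegral_map hf (by fun_prop)]
  · exact Measurable.lintegral_kernel_prod_right' (κ := (R ×ₖ P)) (hf.comp hmp)

lemma dr_data_integral (P : Kernel (S × A) S) [IsMarkovKernel P]
    (Rmax : ℝ) (R : Kernel (S × A) ℝ) [IsMarkovKernel R]
    (hR : ∀ p : S × A, R p (Set.Icc (0 : ℝ) Rmax)ᶜ = 0)
    (πb : Kernel S A) [IsMarkovKernel πb] (μb : Measure S) [IsProbabilityMeasure μb]
    (c γ : ℝ) (k : S × A → ℝ) (hk : Measurable k) (Ck : ℝ) (hCk : ∀ p, |k p| ≤ Ck)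
    (v : S → ℝ) (hv : Measurable v) (Cv : ℝ) (hCv : ∀ s, |v s| ≤ Cv)
    (u : S × A → ℝ) (hu : Measurable u) (Cu : ℝ) (hCu : ∀ p, |u p| ≤ Cu) :
    ∫ x, (c + k (x.1, x.2.1) * (x.2.2.1 + γ * v x.2.2.2 - u (x.1, x.2.1)))
        ∂(dataLaw P R πb μb) =
      c + ∫ p, k p * ((∫ r, r ∂(R p)) + γ * (∫ s', v s' ∂(P p)) - u p) ∂(μb ⊗ₘ πb) := by
  have hmp : Measurable (fun z : (S × A) × (ℝ × S) => (z.1.1, z.1.2, z.2.1, z.2.2)) := by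
    fun_prop
  have hr : ∀ p, ∀ᵐ r ∂(R p), |r| ≤ Rmax := by
    intro p
    have : ∀ᵐ r ∂(R p), r ∈ Set.Icc (0 : ℝ) Rmax := by
      rw [ae_iff]; exact hR p
    filter_upwards [this] with r hr
    rw [abs_of_nonneg hr.1]; exact hr.2
  have hrint : ∀ p, Integrable (fun r : ℝ => r) (R p) := fun p =>
    Integrable.of_bound measurable_id.aestronglyMeasurable Rmax (hr p)
  rw [dr_dataLaw, integral_map hmp.aemeasurable (by
    apply Measurable.aestronglyMeasurable; fun_prop)]
  have hF : Measurable fun z : (S × A) × (ℝ × S) =>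
      c + k z.1 * (z.2.1 + γ * v z.2.2 - u z.1) := by fun_prop
  have hae : ∀ᵐ z ∂((μb ⊗ₘ πb) ⊗ₘ (R ×ₖ P)), |z.2.1| ≤ Rmax := by
    rw [Measure.ae_compProd_iff (measurableSet_le (by fun_prop) (by fun_prop))]
    refine Filter.Eventually.of_forall fun p => ?_
    rw [Kernel.prod_apply]
    exact Measure.quasiMeasurePreserving_fst.ae (hr p)
  have hFi : Integrable (fun z : (S × A) × (ℝ × S) =>
      c + k z.1 * (z.2.1 + γ * v z.2.2 - u z.1)) ((μb ⊗ₘ πb) ⊗ₘ (R ×ₖ P)) := by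
    refine Integrable.of_bound hF.aestronglyMeasurable
      (|c| + Ck * (Rmax + |γ| * Cv + Cu)) ?_
    filter_upwards [hae] with z hz
    rw [Real.norm_eq_abs]
    refine (abs_add_le _ _).trans (add_le_add le_rfl (dr_mul_bound (hCk _) ?_))
    refine (abs_sub _ _).trans (add_le_add ?_ (hCu _))
    exact (abs_add_le _ _).trans (add_le_add hz (dr_mul_bound le_rfl (hCv _)))
  have hrbm : Measurable fun p : S × A => ∫ r, r ∂(R p) :=
    dr_meas R (f := fun _ y => y) measurable_snd
  have hvm : Measurable fun p : S × A => ∫ y, v y ∂(P p) :=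
    dr_meas P (f := fun _ y => v y) (hv.comp measurable_snd)
  have hrb : ∀ p, |∫ r, r ∂(R p)| ≤ Rmax := by
    intro p
    have := norm_integral_le_of_norm_le_const (μ := R p) (f := fun r : ℝ => r) (hr p)
    simpa using this
  rw [Measure.integral_compProd hFi]
  have hinner : ∀ p : S × A, ∫ y, (c + k p * (y.1 + γ * v y.2 - u p)) ∂((R ×ₖ P) p)
      = c + k p * ((∫ r, r ∂(R p)) + γ * (∫ s', v s' ∂(P p)) - u p) := by
    intro p
    rw [Kernel.prod_apply]
    have i1 : Integrable (fun y : ℝ × S => y.1) ((R p).prod (P p)) := (hrint p).comp_fst _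
    have i2 : Integrable (fun y : ℝ × S => γ * v y.2) ((R p).prod (P p)) :=
      ((dr_integrable hv hCv).comp_snd _).const_mul _
    have i3 : Integrable (fun y : ℝ × S => y.1 + γ * v y.2) ((R p).prod (P p)) := i1.add i2
    have i4 : Integrable (fun y : ℝ × S => y.1 + γ * v y.2 - u p) ((R p).prod (P p)) :=
      i3.sub (integrable_const _)
    rw [integral_add (integrable_const _) (i4.const_mul _), integral_const_mul,
      integral_sub i3 (integrable_const _), integral_add i1 i2, integral_const_mul,
      integral_fun_fst (fun r : ℝ => r), integral_fun_snd v]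
    simp
  simp only
  simp_rw [hinner]
  rw [integral_add (integrable_const _)]
  · simp
  · refine dr_integrable (C := Ck * (Rmax + |γ| * Cv + Cu)) (by fun_prop) fun p => ?_
    refine dr_mul_bound (hCk _) ?_
    refine (abs_sub _ _).trans (add_le_add ?_ (hCu _))
    exact (abs_add_le _ _).trans (add_le_add (hrb p) (dr_mul_bound le_rfl (dr_bound hCv)))

lemma dr_eta (πe πb : Kernel S A) [IsMarkovKernel πe] [IsMarkovKernel πb] (s : S)
    (η : S → A → ℝ) (hη_meas : Measurable (Function.uncurry η)) (h0 : ∀ s a, 0 ≤ η s a)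
    (h : πe s = (πb s).withDensity fun a => ENNReal.ofReal (η s a)) (f : A → ℝ) :
    ∫ a, f a ∂(πe s) = ∫ a, η s a * f a ∂(πb s) := by
  have hm : Measurable (η s) := hη_meas.comp measurable_prodMk_left
  rw [h, integral_withDensity_eq_integral_toReal_smul hm.ennreal_ofReal
    (Filter.Eventually.of_forall fun _ => ENNReal.ofReal_lt_top)]
  refine integral_congr_ae (Filter.Eventually.of_forall fun a => ?_)
  simp [ENNReal.toReal_ofReal (h0 s a)]

lemma dr_next (P : Kernel (S × A) S) [IsMarkovKernel P]
    (πe πb : Kernel S A) [IsMarkovKernel πe] [IsMarkovKernel πb]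
    (μb : Measure S) [IsProbabilityMeasure μb]
    (η : S → A → ℝ) (hη_meas : Measurable (Function.uncurry η))
    (Cη : ℝ) (hη_bdd : ∀ s a, 0 ≤ η s a ∧ η s a ≤ Cη)
    (hη : ∀ᵐ s ∂μb, πe s = (πb s).withDensity fun a => ENNReal.ofReal (η s a))
    (CS' : ℝ)
    (hac : (μb.bind fun s => stateKernel P πb s).AbsolutelyContinuous μb)
    (hdens : ∀ᵐ s ∂μb,
      (μb.bind fun u => stateKernel P πb u).rnDeriv μb s ≤ ENNReal.ofReal CS')
    (g : S → ℝ) (hg : Measurable g) (hg0 : ∀ s, 0 ≤ g s) (C : ℝ) (hC : ∀ s, |g s| ≤ C) :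
    ∫ s, ∫ a, ∫ s', g s' ∂(P (s, a)) ∂(πe s) ∂μb ≤ (Cη * CS') * ∫ s, g s ∂μb := by
  have hP : ∀ p, |∫ s', g s' ∂(P p)| ≤ C := fun p => dr_bound hC
  have hPm : Measurable fun p : S × A => ∫ y, g y ∂(P p) :=
    dr_meas P (f := fun _ y => g y) (hg.comp measurable_snd)
  have hPs : ∀ s, Measurable fun a : A => ∫ y, g y ∂(P (s, a)) := fun s =>
    hPm.comp measurable_prodMk_left
  have hP0 : ∀ p, 0 ≤ ∫ s', g s' ∂(P p) := fun p => integral_nonneg hg0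
  obtain ⟨s0⟩ : Nonempty S := nonempty_of_isProbabilityMeasure μb
  obtain ⟨a0⟩ : Nonempty A := nonempty_of_isProbabilityMeasure (πb s0)
  have hCη : 0 ≤ Cη := (hη_bdd s0 a0).1.trans (hη_bdd s0 a0).2
  set ν : Measure S := μb.bind fun u => stateKernel P πb u with hν
  have : IsProbabilityMeasure ν :=
    inferInstanceAs (IsProbabilityMeasure (μb.bind (stateKernel P πb)))
  have hle : ν ≤ ENNReal.ofReal CS' • μb := by
    rw [← Measure.withDensity_rnDeriv_eq ν μb hac, ← withDensity_const]
    exact withDensity_mono hdens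
  have hCS : 0 ≤ CS' := by
    by_contra hneg
    rw [ENNReal.ofReal_of_nonpos (not_le.mp hneg).le, zero_smul] at hle
    have := hle Set.univ
    simp at this
  have key1 : ∫ s, g s ∂ν ≤ CS' * ∫ s, g s ∂μb := by
    have := integral_mono_measure hle (Filter.Eventually.of_forall hg0)
      ((dr_integrable hg hC).smul_measure ENNReal.ofReal_ne_top)
    rwa [integral_smul_measure, ENNReal.toReal_ofReal hCS, smul_eq_mul] at this
  have key2 : ∫ s, g s ∂ν = ∫ s, ∫ a, ∫ s', g s' ∂(P (s, a)) ∂(πb s) ∂μb := by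
    rw [hν, dr_bind _ _ hg hC]
    simp_rw [dr_stateKernel P πb hg hC]
  have hmπ : ∀ (π : Kernel S A) [IsMarkovKernel π],
      Measurable fun s => ∫ a, ∫ s', g s' ∂(P (s, a)) ∂(π s) := fun π _ =>
    dr_meas π (f := fun s a => ∫ s', g s' ∂(P (s, a))) hPm
  have key3 : ∫ s, ∫ a, ∫ s', g s' ∂(P (s, a)) ∂(πe s) ∂μb
      ≤ Cη * ∫ s, ∫ a, ∫ s', g s' ∂(P (s, a)) ∂(πb s) ∂μb := by
    rw [← integral_const_mul]
    refine integral_mono_ae (dr_integrable (C := C) (hmπ πe) fun s => dr_bound fun a => hP _)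
      ((dr_integrable (C := C) (hmπ πb) fun s => dr_bound fun a => hP _).const_mul _) ?_
    filter_upwards [hη] with s hs
    rw [dr_eta πe πb s η hη_meas (fun s a => (hη_bdd s a).1) hs, ← integral_const_mul]
    have i1 : Integrable (fun a => ∫ s', g s' ∂(P (s, a))) (πb s) :=
      dr_integrable (hPs s) fun a => hP _
    refine integral_mono_of_nonneg (Filter.Eventually.of_forall fun a =>
      mul_nonneg (hη_bdd s a).1 (hP0 _)) (i1.const_mul _)
      (Filter.Eventually.of_forall fun a => ?_)
    exact mul_le_mul_of_nonneg_right (hη_bdd s a).2 (hP0 _)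
  calc _ ≤ _ := key3
    _ = Cη * ∫ s, g s ∂ν := by rw [key2]
    _ ≤ Cη * (CS' * ∫ s, g s ∂μb) := mul_le_mul_of_nonneg_left key1 hCη
    _ = _ := by ring

lemma dr_visit (P : Kernel (S × A) S) [IsMarkovKernel P]
    (γ : ℝ) (hγ0 : 0 < γ) (hγ1 : γ < 1)
    (πe : Kernel S A) [IsMarkovKernel πe]
    (μe μb : Measure S) [IsProbabilityMeasure μe] [IsProbabilityMeasure μb]
    (w : S → ℝ) (hw_meas : Measurable w) (Cw : ℝ)
    (hw_bdd : ∀ s, 0 ≤ w s ∧ w s ≤ Cw)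
    (hw : dgamma γ μe (stateKernel P πe) =
      μb.withDensity fun s => ENNReal.ofReal (w s))
    (f : S → ℝ) (hf : Measurable f) (C : ℝ) (hC : ∀ s, |f s| ≤ C) :
    ∫ s, w s * f s ∂μb = (1 - γ) * ∫ s, f s ∂μe
      + γ * ∫ s, w s * ∫ a, ∫ s', f s' ∂(P (s, a)) ∂(πe s) ∂μb := by
  have hd : ∀ h : S → ℝ, ∫ s, h s ∂(dgamma γ μe (stateKernel P πe)) = ∫ s, w s * h s ∂μb := by
    intro h
    rw [hw, integral_withDensity_eq_integral_toReal_smul hw_meas.ennreal_ofReal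
      (Filter.Eventually.of_forall fun _ => ENNReal.ofReal_lt_top)]
    refine integral_congr_ae (Filter.Eventually.of_forall fun a => ?_)
    simp [ENNReal.toReal_ofReal (hw_bdd a).1]
  have hfin : IsFiniteMeasure (dgamma γ μe (stateKernel P πe)) := by
    rw [hw]
    refine isFiniteMeasure_withDensity_ofReal ?_
    exact (dr_integrable (C := Cw) hw_meas fun s => by
      rw [abs_of_nonneg (hw_bdd s).1]; exact (hw_bdd s).2).2
  have hfin2 : IsFiniteMeasure ((dgamma γ μe (stateKernel P πe)).bind
      fun s => stateKernel P πe s) :=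
    inferInstanceAs (IsFiniteMeasure ((dgamma γ μe (stateKernel P πe)).bind (stateKernel P πe)))
  rw [← hd, ← hd]
  conv_lhs => rw [dr_dgamma]
  rw [integral_add_measure ((dr_integrable hf hC).smul_measure ENNReal.ofReal_ne_top)
    ((dr_integrable hf hC).smul_measure ENNReal.ofReal_ne_top), integral_smul_measure,
    integral_smul_measure, ENNReal.toReal_ofReal hγ0.le,
    ENNReal.toReal_ofReal (by linarith), smul_eq_mul, smul_eq_mul, dr_bind _ _ hf hC]
  simp_rw [dr_stateKernel P πe hf hC]

/-- quantitative doubly robust bias bound: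
`|E_D[ψ(·; w', q')] − ρ| ≤ (1 + γ√(C_η C_{S'}))·‖w'−w‖_{L²(μ_b)}·‖q'−q‖_{L²(ν_e)}`. -/
theorem doubly_robust_bias_bound
    (P : Kernel (S × A) S) [IsMarkovKernel P]
    (Rmax : ℝ) (hRmax : 0 < Rmax)
    (R : Kernel (S × A) ℝ) [IsMarkovKernel R]
    (hR : ∀ p : S × A, R p (Set.Icc (0 : ℝ) Rmax)ᶜ = 0)
    (γ : ℝ) (hγ0 : 0 < γ) (hγ1 : γ < 1)
    (πe πb : Kernel S A) [IsMarkovKernel πe] [IsMarkovKernel πb]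
    (μe μb : Measure S) [IsProbabilityMeasure μe] [IsProbabilityMeasure μb]
    -- the policy density ratio η, bounded by C_η
    (η : S → A → ℝ) (hη_meas : Measurable (Function.uncurry η))
    (Cη : ℝ) (hη_bdd : ∀ s a, 0 ≤ η s a ∧ η s a ≤ Cη)
    (hη : ∀ᵐ s ∂μb, πe s = (πb s).withDensity fun a => ENNReal.ofReal (η s a))
    -- the next-state marginal has density bounded by C_{S'} with respect to μ_b
    (CS' : ℝ)
    (hac : (μb.bind fun s => stateKernel P πb s).AbsolutelyContinuous μb)
    (hdens : ∀ᵐ s ∂μb,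
      (μb.bind fun u => stateKernel P πb u).rnDeriv μb s ≤ ENNReal.ofReal CS')
    -- the stationary density ratio w, a bounded measurable density of d_γ wrt μ_b
    (w : S → ℝ) (hw_meas : Measurable w)
    (hw_bdd : ∃ C : ℝ, ∀ s, 0 ≤ w s ∧ w s ≤ C)
    (hw : dgamma γ μe (stateKernel P πe) =
      μb.withDensity fun s => ENNReal.ofReal (w s))
    -- the q-function: bounded, measurable and satisfying the Bellman evaluation equation
    (q : S → A → ℝ) (hq_meas : Measurable (Function.uncurry q))
    (hq_bdd : ∃ C : ℝ, ∀ s a, |q s a| ≤ C)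
    (hq_bellman : ∀ s a, q s a =
      (∫ r, r ∂(R (s, a))) + γ * ∫ s', (∫ a', q s' a' ∂(πe s')) ∂(P (s, a)))
    -- bounded measurable nuisance candidates
    (w' : S → ℝ) (hw'_meas : Measurable w') (hw'_bdd : ∃ C : ℝ, ∀ s, |w' s| ≤ C)
    (q' : S → A → ℝ) (hq'_meas : Measurable (Function.uncurry q'))
    (hq'_bdd : ∃ C : ℝ, ∀ s a, |q' s a| ≤ C) :
    |∫ x, psiDRL γ μe πe η w' q' x ∂(dataLaw P R πb μb) -
        (1 - γ) * ∫ s, (∫ a, q s a ∂(πe s)) ∂μe| ≤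
      (1 + γ * Real.sqrt (Cη * CS')) *
        Real.sqrt (∫ s, (w' s - w s) ^ 2 ∂μb) *
        Real.sqrt (∫ p, (q' p.1 p.2 - q p.1 p.2) ^ 2 ∂(μb ⊗ₘ πe)) := by
  obtain ⟨Cw, hCw⟩ := hw_bdd
  obtain ⟨Cq, hCq⟩ := hq_bdd
  obtain ⟨Cw', hCw'⟩ := hw'_bdd
  obtain ⟨Cq', hCq'⟩ := hq'_bdd
  have hCwa : ∀ s, |w s| ≤ Cw := fun s => by
    rw [abs_of_nonneg (hCw s).1]; exact (hCw s).2
  -- value functions and differences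
  set v : S → ℝ := fun s => ∫ a, q s a ∂(πe s) with hv
  set v' : S → ℝ := fun s => ∫ a, q' s a ∂(πe s) with hv'
  have hvm : Measurable v := dr_meas πe hq_meas
  have hv'm : Measurable v' := dr_meas πe hq'_meas
  have hvb : ∀ s, |v s| ≤ Cq := fun s => dr_bound (hCq s)
  have hv'b : ∀ s, |v' s| ≤ Cq' := fun s => dr_bound (hCq' s)
  have hqs : ∀ s, Measurable (q s) := fun s => hq_meas.comp measurable_prodMk_left
  have hq's : ∀ s, Measurable (q' s) := fun s => hq'_meas.comp measurable_prodMk_left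
  set dv : S → ℝ := fun s => v' s - v s with hdv
  have hdvm : Measurable dv := hv'm.sub hvm
  have hdvb : ∀ s, |dv s| ≤ Cq' + Cq := fun s =>
    (abs_sub _ _).trans (add_le_add (hv'b s) (hvb s))
  set dq : S → A → ℝ := fun s a => q' s a - q s a with hdq
  have hdqm : Measurable (Function.uncurry dq) := hq'_meas.sub hq_meas
  have hdqs : ∀ s, Measurable (dq s) := fun s => (hq's s).sub (hqs s)
  have hdqb : ∀ s a, |dq s a| ≤ Cq' + Cq := fun s a =>
    (abs_sub _ _).trans (add_le_add (hCq' s a) (hCq s a))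
  have hdvq : ∀ s, dv s = ∫ a, dq s a ∂(πe s) := fun s => by
    simp only [hdv, hdq, hv, hv']
    rw [integral_sub (dr_integrable (hq's s) (hCq' s)) (dr_integrable (hqs s) (hCq s))]
  set dw : S → ℝ := fun s => w' s - w s with hdw
  have hdwm : Measurable dw := hw'_meas.sub hw_meas
  have hdwb : ∀ s, |dw s| ≤ Cw' + Cw := fun s =>
    (abs_sub _ _).trans (add_le_add (hCw' s) (hCwa s))
  -- transition of dv
  have hPm : Measurable fun p : S × A => ∫ y, dv y ∂(P p) :=
    dr_meas P (f := fun _ y => dv y) (hdvm.comp measurable_snd)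
  have hPb : ∀ p, |∫ y, dv y ∂(P p)| ≤ Cq' + Cq := fun p => dr_bound hdvb
  have hPs : ∀ s, Measurable fun a : A => ∫ y, dv y ∂(P (s, a)) := fun s =>
    hPm.comp measurable_prodMk_left
  set T : S → ℝ := fun s => ∫ a, ∫ s', dv s' ∂(P (s, a)) ∂(πe s) with hT
  have hTm : Measurable T := dr_meas πe (f := fun s a => ∫ s', dv s' ∂(P (s, a))) hPm
  have hTb : ∀ s, |T s| ≤ Cq' + Cq := fun s => dr_bound fun a => hPb _
  obtain ⟨s0⟩ : Nonempty S := nonempty_of_isProbabilityMeasure μb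
  obtain ⟨a0⟩ : Nonempty A := nonempty_of_isProbabilityMeasure (πb s0)
  have hηa : ∀ s a, |η s a| ≤ Cη := fun s a => by
    rw [abs_of_nonneg (hη_bdd s a).1]; exact (hη_bdd s a).2
  -- expectation of the estimating function
  have hG : ∀ p : S × A, (∫ r, r ∂(R p)) + γ * (∫ s', v' s' ∂(P p)) - q' p.1 p.2
      = γ * (∫ s', dv s' ∂(P p)) - dq p.1 p.2 := by
    rintro ⟨s, a⟩
    have h1 := hq_bellman s a
    have h2 : ∫ s', dv s' ∂(P (s, a)) = ∫ s', v' s' ∂(P (s, a)) - ∫ s', v s' ∂(P (s, a)) := by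
      simp only [hdv]
      rw [integral_sub (dr_integrable hv'm hv'b) (dr_integrable hvm hvb)]
    simp only [hdq, h2]
    linarith
  have hkm : Measurable fun p : S × A => w' p.1 * η p.1 p.2 :=
    (hw'_meas.comp measurable_fst).mul hη_meas
  have hkb : ∀ p : S × A, |w' p.1 * η p.1 p.2| ≤ Cw' * Cη := fun p =>
    dr_mul_bound (hCw' _) (hηa _ _)
  have hE : ∫ x, psiDRL γ μe πe η w' q' x ∂(dataLaw P R πb μb)
      = (1 - γ) * (∫ s, v' s ∂μe) + ∫ s, w' s * (γ * T s - dv s) ∂μb := by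
    have h1 := dr_data_integral P Rmax R hR πb μb ((1 - γ) * (∫ s, v' s ∂μe)) γ
      (fun p => w' p.1 * η p.1 p.2) hkm (Cw' * Cη) hkb v' hv'm Cq' hv'b
      (fun p => q' p.1 p.2) hq'_meas Cq' (fun p => hCq' _ _)
    have h0 : ∫ x, psiDRL γ μe πe η w' q' x ∂(dataLaw P R πb μb) = _ := h1
    rw [h0]
    congr 1
    simp_rw [hG]
    have hGm : Measurable fun p : S × A => γ * (∫ s', dv s' ∂(P p)) - dq p.1 p.2 :=
      (hPm.const_mul γ).sub hdqm
    have hGb : ∀ p : S × A, |γ * (∫ s', dv s' ∂(P p)) - dq p.1 p.2|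
        ≤ |γ| * (Cq' + Cq) + (Cq' + Cq) := fun p =>
      (abs_sub _ _).trans (add_le_add (dr_mul_bound le_rfl (hPb p)) (hdqb _ _))
    have hint : Integrable (fun p : S × A => w' p.1 * η p.1 p.2 *
        (γ * (∫ s', dv s' ∂(P p)) - dq p.1 p.2)) (μb ⊗ₘ πb) :=
      dr_integrable (hkm.mul hGm) fun p => dr_mul_bound (hkb p) (hGb p)
    rw [Measure.integral_compProd hint]
    refine integral_congr_ae ?_
    filter_upwards [hη] with s hs
    have h2 : γ * T s - dv s = ∫ a, (γ * (∫ s', dv s' ∂(P (s, a))) - dq s a) ∂(πe s) := by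
      rw [integral_sub ((dr_integrable (hPs s) fun a => hPb _).const_mul _)
        (dr_integrable (hdqs s) (hdqb s)), integral_const_mul, ← hdvq]
    rw [h2, dr_eta πe πb s η hη_meas (fun s a => (hη_bdd s a).1) hs, ← integral_const_mul]
    refine integral_congr_ae (Filter.Eventually.of_forall fun a => ?_)
    simp only
    ring
  have hvis := dr_visit P γ hγ0 hγ1 πe μe μb w hw_meas Cw hCw hw dv hdvm _ hdvb
  have hdiff : ∫ x, psiDRL γ μe πe η w' q' x ∂(dataLaw P R πb μb) - (1 - γ) * ∫ s, v s ∂μe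
      = γ * (∫ s, dw s * T s ∂μb) - ∫ s, dw s * dv s ∂μb := by
    rw [hE]
    have e1 : ∫ s, dv s ∂μe = ∫ s, v' s ∂μe - ∫ s, v s ∂μe := by
      simp only [hdv]
      rw [integral_sub (dr_integrable hv'm hv'b) (dr_integrable hvm hvb)]
    have iw'T : Integrable (fun s => w' s * T s) μb :=
      dr_integrable (hw'_meas.mul hTm) fun s => dr_mul_bound (hCw' s) (hTb s)
    have iwT : Integrable (fun s => w s * T s) μb :=
      dr_integrable (hw_meas.mul hTm) fun s => dr_mul_bound (hCwa s) (hTb s)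
    have iw'v : Integrable (fun s => w' s * dv s) μb :=
      dr_integrable (hw'_meas.mul hdvm) fun s => dr_mul_bound (hCw' s) (hdvb s)
    have iwv : Integrable (fun s => w s * dv s) μb :=
      dr_integrable (hw_meas.mul hdvm) fun s => dr_mul_bound (hCwa s) (hdvb s)
    have e2 : ∫ s, w' s * (γ * T s - dv s) ∂μb
        = γ * (∫ s, w' s * T s ∂μb) - ∫ s, w' s * dv s ∂μb := by
      rw [← integral_const_mul, ← integral_sub (iw'T.const_mul _) iw'v]
      refine integral_congr_ae (Filter.Eventually.of_forall fun a => ?_)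
      simp only
      ring
    have e3 : ∫ s, dw s * T s ∂μb = ∫ s, w' s * T s ∂μb - ∫ s, w s * T s ∂μb := by
      rw [← integral_sub iw'T iwT]
      simp only [hdw, sub_mul]
    have e4 : ∫ s, dw s * dv s ∂μb = ∫ s, w' s * dv s ∂μb - ∫ s, w s * dv s ∂μb := by
      rw [← integral_sub iw'v iwv]
      simp only [hdw, sub_mul]
    rw [e1] at hvis
    rw [e2, e3, e4, hvis]
    ring
  rw [hdiff]
  -- the two second-moment bounds
  have hdv2b : ∀ s, |dv s ^ 2| ≤ (Cq' + Cq) ^ 2 := fun s => dr_sq_bound (hdvb s)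
  have hdq2m : Measurable fun p : S × A => dq p.1 p.2 ^ 2 := hdqm.pow_const 2
  have hB1 : ∫ s, dv s ^ 2 ∂μb ≤ ∫ p, dq p.1 p.2 ^ 2 ∂(μb ⊗ₘ πe) := by
    rw [Measure.integral_compProd (dr_integrable hdq2m fun p => dr_sq_bound (hdqb _ _))]
    refine integral_mono (dr_integrable (hdvm.pow_const 2) hdv2b)
      (dr_integrable (C := (Cq' + Cq) ^ 2) (dr_meas πe (f := fun s a => dq s a ^ 2) hdq2m)
        fun s => dr_bound fun a => dr_sq_bound (hdqb _ _)) fun s => ?_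
    simp only [hdvq]
    exact dr_jensen (hdqs s) (hdqb s)
  have hB2 : ∫ s, T s ^ 2 ∂μb ≤ (Cη * CS') * ∫ s, dv s ^ 2 ∂μb := by
    refine le_trans ?_ (dr_next P πe πb μb η hη_meas Cη hη_bdd hη CS' hac hdens
      (fun s => dv s ^ 2) (hdvm.pow_const 2) (fun s => sq_nonneg _) _ hdv2b)
    have hP2m : Measurable fun p : S × A => ∫ y, dv y ^ 2 ∂(P p) :=
      dr_meas P (f := fun _ y => dv y ^ 2) ((hdvm.pow_const 2).comp measurable_snd)
    have hP2b : ∀ p, |∫ y, dv y ^ 2 ∂(P p)| ≤ (Cq' + Cq) ^ 2 := fun p => dr_bound hdv2b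
    refine integral_mono (dr_integrable (hTm.pow_const 2) fun s => dr_sq_bound (hTb s))
      (dr_integrable (C := (Cq' + Cq) ^ 2)
        (dr_meas πe (f := fun s a => ∫ y, dv y ^ 2 ∂(P (s, a))) hP2m)
        fun s => dr_bound fun a => hP2b _) fun s => ?_
    refine (dr_jensen (hPs s) fun a => hPb _).trans ?_
    refine integral_mono (dr_integrable ((hPs s).pow_const 2) fun a => dr_sq_bound (hPb _))
      (dr_integrable (hP2m.comp measurable_prodMk_left) fun a => hP2b _) fun a => ?_
    exact dr_jensen hdvm hdvb
  have c1 := dr_cs (μ := μb) hdwm hdwb hdvm hdvb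
  have c2 := dr_cs (μ := μb) hdwm hdwb hTm hTb
  set W := √(∫ s, dw s ^ 2 ∂μb) with hW
  set Q := √(∫ p, dq p.1 p.2 ^ 2 ∂(μb ⊗ₘ πe)) with hQ
  have hW0 : 0 ≤ W := Real.sqrt_nonneg _
  have d1 : √(∫ s, dv s ^ 2 ∂μb) ≤ Q := Real.sqrt_le_sqrt hB1
  have d2 : √(∫ s, T s ^ 2 ∂μb) ≤ √(Cη * CS') * Q := by
    refine (Real.sqrt_le_sqrt hB2).trans ?_
    rw [Real.sqrt_mul' _ (integral_nonneg fun s => sq_nonneg _)]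
    exact mul_le_mul_of_nonneg_left d1 (Real.sqrt_nonneg _)
  calc |γ * (∫ s, dw s * T s ∂μb) - ∫ s, dw s * dv s ∂μb|
      ≤ |γ * (∫ s, dw s * T s ∂μb)| + |∫ s, dw s * dv s ∂μb| := abs_sub _ _
    _ = γ * |∫ s, dw s * T s ∂μb| + |∫ s, dw s * dv s ∂μb| := by
        rw [abs_mul, abs_of_pos hγ0]
    _ ≤ γ * (W * (√(Cη * CS') * Q)) + W * Q := by
        refine add_le_add (mul_le_mul_of_nonneg_left
          (c2.trans (mul_le_mul_of_nonneg_left d2 hW0)) hγ0.le)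
          (c1.trans (mul_le_mul_of_nonneg_left d1 hW0))
    _ = (1 + γ * √(Cη * CS')) * W * Q := by ring


end
end

section
/- (Term-by-term comparison of the Markov and non-Markov efficiency bounds: EB(M_2) ≤ EB(M_1).) Assume η is bounded. Fix k ≥ 0 and a bounded measurable f : S × A × ℝ × S → ℝ, and set Z = f(s_k, a_k, r_k, s_{k+1}). Let 𝓕_k = σ(s_0, a_0, …, s_k, a_k) and 𝒢_k = σ(s_k, a_k), let ν_k = Π_{j=0}^k η(s_j, a_j) be the cumulative density ratio and μ_k = E_{P_b}[ν_k | 𝒢_k] the marginal density ratio, and let Var(Z | ·) denote conditional variance. Then E_{P_b}[ μ_k² · Var(Z | 𝒢_k) ] ≤ E_{P_b}[ ν_k² · Var(Z | 𝓕_k) ]. -/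
open MeasureTheory ProbabilityTheory
open scoped ENNReal

noncomputable section

variable {S A : Type*} [MeasurableSpace S] [MeasurableSpace A]

/-- The law of the initial triple `(s₀, a₀, r₀)` under the behavior policy. -/
def initLaw (R : Kernel (S × A) ℝ) (πb : Kernel S A) (μb : Measure S) :
    Measure (S × A × ℝ) :=
  μb.bind fun s => (πb s).bind fun a => (R (s, a)).map fun r => (s, a, r)

/-- The one-step transition of the behavior trajectory. -/
def stepLaw (P : Kernel (S × A) S) (R : Kernel (S × A) ℝ) (πb : Kernel S A)
    (x : S × A × ℝ) : Measure (S × A × ℝ) :=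
  (P (x.1, x.2.1)).bind fun s' => (πb s').bind fun a' =>
    (R (s', a')).map fun r' => (s', a', r')

/-- The law of the length-`(n+1)` prefix of the behavior trajectory. -/
def finLaw (P : Kernel (S × A) S) (R : Kernel (S × A) ℝ) (πb : Kernel S A)
    (μb : Measure S) : (n : ℕ) → Measure (Fin (n + 1) → S × A × ℝ)
  | 0 => (initLaw R πb μb).map fun x => fun _ => x
  | n + 1 => (finLaw P R πb μb n).bind fun path =>
      (stepLaw P R πb (path (Fin.last n))).map (Fin.snoc path)

/-- The transition observed at time `t` along a trajectory. -/
def Xt (t : ℕ) (ω : ℕ → S × A × ℝ) : S × A × ℝ × S :=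
  ((ω t).1, (ω t).2.1, (ω t).2.2, (ω (t + 1)).1)

/-- The σ-algebra `𝓕_k = σ(s₀, a₀, …, s_k, a_k)`. -/
def historySA (k : ℕ) : MeasurableSpace (ℕ → S × A × ℝ) :=
  ⨆ j : Fin (k + 1),
    MeasurableSpace.comap (fun ω : ℕ → S × A × ℝ => ((ω (j : ℕ)).1, (ω (j : ℕ)).2.1))
      inferInstance

/-- The σ-algebra `𝓖_k = σ(s_k, a_k)`. -/
def currentSA (k : ℕ) : MeasurableSpace (ℕ → S × A × ℝ) :=
  MeasurableSpace.comap (fun ω : ℕ → S × A × ℝ => ((ω k).1, (ω k).2.1)) inferInstance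

/-- The conditional variance of `g` given the σ-algebra `m`, under `μ`. -/
def condVar {Ω : Type*} {m0 : MeasurableSpace Ω} (m : MeasurableSpace Ω)
    (μ : @Measure Ω m0) (g : Ω → ℝ) : Ω → ℝ :=
  μ[fun ω => (g ω - (μ[g|m]) ω) ^ 2 | m]


section Helpers

lemma meas_map_param {X Y W : Type*} [MeasurableSpace X] [MeasurableSpace Y] [MeasurableSpace W]
    (κ : Kernel X Y) [IsSFiniteKernel κ] (g : X → Y → W)
    (hg : Measurable (Function.uncurry g)) : Measurable fun x => (κ x).map (g x) := by
  refine Measure.measurable_of_measurable_coe _ fun B hB => ?_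
  have h : ∀ x, (κ x).map (g x) B = κ x (Prod.mk x ⁻¹' (Function.uncurry g ⁻¹' B)) := by
    intro x
    have hx : Measurable (g x) := hg.comp measurable_prodMk_left
    rw [Measure.map_apply hx hB]
    rfl
  simp_rw [h]
  exact Kernel.measurable_kernel_prodMk_left (hg hB)

lemma meas_bind_param {X Y W : Type*} [MeasurableSpace X] [MeasurableSpace Y] [MeasurableSpace W]
    (κ : Kernel X Y) [IsSFiniteKernel κ] (m : X → Y → Measure W)
    (hm : Measurable (Function.uncurry m)) : Measurable fun x => (κ x).bind (m x) := by
  refine Measure.measurable_of_measurable_coe _ fun B hB => ?_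
  have h : ∀ x, (κ x).bind (m x) B = ∫⁻ y, Function.uncurry m (x, y) B ∂(κ x) := by
    intro x
    have hx : Measurable (m x) := hm.comp measurable_prodMk_left
    rw [Measure.bind_apply hB hx.aemeasurable]
    rfl
  simp_rw [h]
  exact Measurable.lintegral_kernel_prod_right' ((Measure.measurable_coe hB).comp hm)

/-- Law of the triple given the state. -/
def triLaw (R : Kernel (S × A) ℝ) (πb : Kernel S A) (s : S) : Measure (S × A × ℝ) :=
  (πb s).bind fun a => (R (s, a)).map fun r => (s, a, r)

lemma meas_triLaw0 (R : Kernel (S × A) ℝ) [IsMarkovKernel R] :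
    Measurable fun p : S × A => (R p).map fun r => (p.1, p.2, r) :=
  meas_map_param R (fun p r => (p.1, p.2, r)) (by unfold Function.uncurry; fun_prop)

lemma meas_triLaw (R : Kernel (S × A) ℝ) [IsMarkovKernel R] (πb : Kernel S A) [IsMarkovKernel πb] :
    Measurable (triLaw R πb) :=
  meas_bind_param πb (fun s a => (R (s, a)).map fun r => (s, a, r)) (meas_triLaw0 R)

lemma lint_triLaw (R : Kernel (S × A) ℝ) [IsMarkovKernel R] (πb : Kernel S A) [IsMarkovKernel πb]
    (s : S) (F : S × A × ℝ → ℝ≥0∞) (hF : Measurable F) :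
    ∫⁻ x, F x ∂(triLaw R πb s) = ∫⁻ a, ∫⁻ r, F (s, a, r) ∂(R (s, a)) ∂(πb s) := by
  unfold triLaw
  have hx : Measurable fun a => (R (s, a)).map fun r => (s, a, r) :=
    (meas_triLaw0 R).comp measurable_prodMk_left
  rw [Measure.lintegral_bind hx.aemeasurable hF.aemeasurable]
  refine lintegral_congr fun a => ?_
  rw [lintegral_map hF (by fun_prop)]

lemma lint_initLaw (R : Kernel (S × A) ℝ) [IsMarkovKernel R] (πb : Kernel S A) [IsMarkovKernel πb]
    (μb : Measure S) (F : S × A × ℝ → ℝ≥0∞) (hF : Measurable F) :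
    ∫⁻ x, F x ∂(initLaw R πb μb) =
      ∫⁻ s, ∫⁻ a, ∫⁻ r, F (s, a, r) ∂(R (s, a)) ∂(πb s) ∂μb := by
  have : initLaw R πb μb = μb.bind (triLaw R πb) := rfl
  rw [this, Measure.lintegral_bind (meas_triLaw R πb).aemeasurable hF.aemeasurable]
  exact lintegral_congr fun s => lint_triLaw R πb s F hF

lemma lint_stepLaw (P : Kernel (S × A) S) [IsMarkovKernel P]
    (R : Kernel (S × A) ℝ) [IsMarkovKernel R] (πb : Kernel S A) [IsMarkovKernel πb]
    (x : S × A × ℝ) (F : S × A × ℝ → ℝ≥0∞) (hF : Measurable F) :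
    ∫⁻ y, F y ∂(stepLaw P R πb x) =
      ∫⁻ s, ∫⁻ a, ∫⁻ r, F (s, a, r) ∂(R (s, a)) ∂(πb s) ∂(P (x.1, x.2.1)) :=
  lint_initLaw R πb (P (x.1, x.2.1)) F hF

/-- The step as a kernel. -/
def stepKer (P : Kernel (S × A) S) [IsMarkovKernel P]
    (R : Kernel (S × A) ℝ) [IsMarkovKernel R] (πb : Kernel S A) [IsMarkovKernel πb] :
    Kernel (S × A × ℝ) (S × A × ℝ) where
  toFun := stepLaw P R πb
  measurable' := by
    have h := meas_bind_param (P.comap (fun x : S × A × ℝ => (x.1, x.2.1)) (by fun_prop))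
      (fun _ s => triLaw R πb s) ((meas_triLaw R πb).comp measurable_snd)
    exact h

instance (P : Kernel (S × A) S) [IsMarkovKernel P]
    (R : Kernel (S × A) ℝ) [IsMarkovKernel R] (πb : Kernel S A) [IsMarkovKernel πb] :
    IsMarkovKernel (stepKer P R πb) := by
  refine ⟨fun x => ⟨?_⟩⟩
  have h := lint_stepLaw P R πb x (fun _ => 1) measurable_const
  simp only [lintegral_const, measure_univ, one_mul, mul_one] at h
  exact h

lemma meas_snoc (n : ℕ) {X : Type*} [MeasurableSpace X] :
    Measurable fun q : (Fin (n + 1) → X) × X =>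
      (Fin.snoc (α := fun _ => X) q.1 q.2 : Fin (n + 2) → X) := by
  refine measurable_pi_lambda _ fun i => ?_
  refine Fin.lastCases ?_ (fun j => ?_) i
  · simp only [Fin.snoc_last]; fun_prop
  · simp only [Fin.snoc_castSucc]; fun_prop

lemma lint_finLaw_succ (P : Kernel (S × A) S) [IsMarkovKernel P]
    (R : Kernel (S × A) ℝ) [IsMarkovKernel R] (πb : Kernel S A) [IsMarkovKernel πb]
    (μb : Measure S) (n : ℕ) (F : (Fin (n + 2) → S × A × ℝ) → ℝ≥0∞) (hF : Measurable F) :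
    ∫⁻ x, F x ∂(finLaw P R πb μb (n + 1)) =
      ∫⁻ p, ∫⁻ s, ∫⁻ a, ∫⁻ r, F (Fin.snoc (α := fun _ => S × A × ℝ) p (s, a, r))
        ∂(R (s, a)) ∂(πb s) ∂(P ((p (Fin.last n)).1, (p (Fin.last n)).2.1))
        ∂(finLaw P R πb μb n) := by
  have hm : Measurable fun p : Fin (n + 1) → S × A × ℝ =>
      (stepLaw P R πb (p (Fin.last n))).map (Fin.snoc (α := fun _ => S × A × ℝ) p) :=
    meas_map_param ((stepKer P R πb).comap
      (fun p : Fin (n + 1) → S × A × ℝ => p (Fin.last n)) (by fun_prop))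
      (fun p x => Fin.snoc (α := fun _ => S × A × ℝ) p x) (meas_snoc n)
  have : finLaw P R πb μb (n + 1) = (finLaw P R πb μb n).bind fun p =>
      (stepLaw P R πb (p (Fin.last n))).map (Fin.snoc (α := fun _ => S × A × ℝ) p) := rfl
  rw [this, Measure.lintegral_bind hm.aemeasurable hF.aemeasurable]
  refine lintegral_congr fun p => ?_
  have hs : Measurable (Fin.snoc (α := fun _ => S × A × ℝ) p) :=
    (meas_snoc n).comp measurable_prodMk_left
  rw [lintegral_map hF hs]
  exact lint_stepLaw P R πb _ _ (hF.comp hs)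

/-- Forget the rewards. -/
def forget (n : ℕ) (p : Fin (n + 1) → S × A × ℝ) : Fin (n + 1) → S × A :=
  fun i => ((p i).1, (p i).2.1)

lemma meas_forget (n : ℕ) : Measurable (forget (S := S) (A := A) n) := by
  unfold forget; fun_prop

lemma lint_reward (P : Kernel (S × A) S) [IsMarkovKernel P]
    (R : Kernel (S × A) ℝ) [IsMarkovKernel R] (πb : Kernel S A) [IsMarkovKernel πb]
    (μb : Measure S) (n : ℕ) (F : (Fin (n + 1) → S × A) × ℝ → ℝ≥0∞) (hF : Measurable F) :
    ∫⁻ p, F (forget n p, (p (Fin.last n)).2.2) ∂(finLaw P R πb μb n) =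
      ∫⁻ p, ∫⁻ r, F (forget n p, r) ∂(R (forget n p (Fin.last n))) ∂(finLaw P R πb μb n) := by
  have hf := meas_forget (S := S) (A := A) n
  have m1 : Measurable fun p : Fin (n + 1) → S × A × ℝ =>
      F (forget n p, (p (Fin.last n)).2.2) := by fun_prop
  have m2 : Measurable fun p : Fin (n + 1) → S × A × ℝ =>
      ∫⁻ r, F (forget n p, r) ∂(R (forget n p (Fin.last n))) := by
    have := Measurable.lintegral_kernel_prod_right' (κ := R.comap
      (fun h : Fin (n + 1) → S × A => h (Fin.last n)) (by fun_prop)) hF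
    exact this.comp hf
  cases n with
  | zero =>
    have e : finLaw P R πb μb 0 = (initLaw R πb μb).map fun x => fun _ => x := rfl
    have hc : Measurable fun x : S × A × ℝ => (fun _ : Fin 1 => x) := by fun_prop
    rw [e, lintegral_map m1 hc, lintegral_map m2 hc]
    refine (lint_initLaw _ _ _ _ (m1.comp hc)).trans
      (Eq.trans ?_ (lint_initLaw _ _ _ _ (m2.comp hc)).symm)
    refine lintegral_congr fun s => lintegral_congr fun a => ?_
    have hfr : ∀ r : ℝ, forget 0 (fun _ => (s, a, r)) = fun _ => (s, a) := fun r => rfl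
    simp [hfr]
  | succ n =>
    rw [lint_finLaw_succ P R πb μb n _ m1, lint_finLaw_succ P R πb μb n _ m2]
    refine lintegral_congr fun p => lintegral_congr fun s => lintegral_congr fun a => ?_
    have hfr : ∀ r r' : ℝ, forget (n + 1) (Fin.snoc (α := fun _ => S × A × ℝ) p (s, a, r)) =
        forget (n + 1) (Fin.snoc (α := fun _ => S × A × ℝ) p (s, a, r')) := by
      intro r r'
      funext i
      refine Fin.lastCases ?_ (fun j => ?_) i <;> simp [forget]
    have hl : forget (n + 1) (Fin.snoc (α := fun _ => S × A × ℝ) p (s, a, 0))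
        (Fin.last (n + 1)) = (s, a) := by simp [forget]
    simp_rw [fun r => hfr r 0, hl]
    simp

/-- Reward and next state given history. -/
def outKer (P : Kernel (S × A) S) (R : Kernel (S × A) ℝ) (k : ℕ) :
    Kernel (Fin (k + 1) → S × A) (ℝ × S) :=
  (R ×ₖ P).comap (fun h => h (Fin.last k)) (by fun_prop)

instance (P : Kernel (S × A) S) [IsMarkovKernel P] (R : Kernel (S × A) ℝ) [IsMarkovKernel R]
    (k : ℕ) : IsMarkovKernel (outKer P R k) := by unfold outKer; infer_instance

/-- The state-action history. -/
def hist (k : ℕ) (ω : ℕ → S × A × ℝ) : Fin (k + 1) → S × A :=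
  fun i => ((ω i).1, (ω i).2.1)

lemma meas_hist (k : ℕ) : Measurable (hist (S := S) (A := A) k) := by
  unfold hist; fun_prop

lemma historySA_eq (k : ℕ) :
    historySA (S := S) (A := A) k = MeasurableSpace.comap (hist k) inferInstance := by
  unfold historySA MeasurableSpace.pi
  rw [MeasurableSpace.comap_iSup]
  simp_rw [MeasurableSpace.comap_comp]
  rfl

lemma joint_law (P : Kernel (S × A) S) [IsMarkovKernel P]
    (R : Kernel (S × A) ℝ) [IsMarkovKernel R] (πb : Kernel S A) [IsMarkovKernel πb]
    (μb : Measure S) (Pb : Measure (ℕ → S × A × ℝ)) [IsProbabilityMeasure Pb]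
    (hPb : ∀ n : ℕ, Pb.map (fun ω => fun i : Fin (n + 1) => ω i) = finLaw P R πb μb n)
    (k : ℕ) :
    Pb.map (fun ω => (hist k ω, ((ω k).2.2, (ω (k + 1)).1))) =
      (Pb.map (hist k)) ⊗ₘ (outKer P R k) := by
  have hh := meas_hist (S := S) (A := A) k
  have hf := meas_forget (S := S) (A := A) k
  refine Measure.ext_of_lintegral _ fun F hF => ?_
  have mr : ∀ n, Measurable fun (ω : ℕ → S × A × ℝ) => fun i : Fin (n + 1) => ω i := by
    intro n; fun_prop
  have m0 : Measurable fun q : (Fin (k + 1) → S × A) × ℝ =>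
      ∫⁻ s, F (q.1, q.2, s) ∂(P (q.1 (Fin.last k))) := by
    have := Measurable.lintegral_kernel_prod_right' (κ := P.comap
      (fun q : (Fin (k + 1) → S × A) × ℝ => q.1 (Fin.last k)) (by fun_prop))
      (f := fun z => F (z.1.1, z.1.2, z.2)) (by fun_prop)
    exact this
  have m1 : Measurable fun p : Fin (k + 2) → S × A × ℝ =>
      F (fun i : Fin (k + 1) => ((p i.castSucc).1, (p i.castSucc).2.1),
        (p (Fin.last k).castSucc).2.2, (p (Fin.last (k + 1))).1) := by fun_prop
  have m2 : Measurable fun h : Fin (k + 1) → S × A =>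
      ∫⁻ z, F (h, z) ∂(outKer P R k h) := Measurable.lintegral_kernel_prod_right' hF
  rw [lintegral_map hF (by fun_prop), Measure.lintegral_compProd hF, lintegral_map m2 hh]
  have e1 : ∫⁻ ω, F (hist k ω, ((ω k).2.2, (ω (k + 1)).1)) ∂Pb =
      ∫⁻ p, F (fun i : Fin (k + 1) => ((p i.castSucc).1, (p i.castSucc).2.1),
        (p (Fin.last k).castSucc).2.2, (p (Fin.last (k + 1))).1) ∂(finLaw P R πb μb (k + 1)) := by
    rw [← hPb (k + 1), lintegral_map m1 (mr _)]
    rfl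
  have e2 : ∫⁻ ω, ∫⁻ z, F (hist k ω, z) ∂(outKer P R k (hist k ω)) ∂Pb =
      ∫⁻ p, ∫⁻ z, F (forget k p, z) ∂(outKer P R k (forget k p)) ∂(finLaw P R πb μb k) := by
    rw [← hPb k]
    exact (lintegral_map (m2.comp hf) (mr _)).symm
  rw [e1, e2, lint_finLaw_succ P R πb μb k _ m1]
  have := lint_reward P R πb μb k _ m0
  simp only [Fin.snoc_castSucc, Fin.snoc_last, lintegral_const, measure_univ, mul_one]
  refine this.trans (lintegral_congr fun p => ?_)
  have : outKer P R k (forget k p) =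
    (R (forget k p (Fin.last k))).prod (P (forget k p (Fin.last k))) := by
    simp [outKer, Kernel.prod_apply]
  rw [this, lintegral_prod _ (by fun_prop)]

/-- Conditional mean of a function of one transition. -/
def cmean (P : Kernel (S × A) S) (R : Kernel (S × A) ℝ) (φ : S × A × ℝ × S → ℝ) (p : S × A) : ℝ :=
  ∫ z, φ (p.1, p.2, z.1, z.2) ∂((R ×ₖ P) p)

lemma currentSA_le_historySA (k : ℕ) :
    currentSA (S := S) (A := A) k ≤ historySA k :=
  le_iSup (fun j : Fin (k + 1) => MeasurableSpace.comap
    (fun ω : ℕ → S × A × ℝ => ((ω (j : ℕ)).1, (ω (j : ℕ)).2.1)) inferInstance) (Fin.last k)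

lemma historySA_le (k : ℕ) :
    historySA (S := S) (A := A) k ≤ MeasurableSpace.pi := by
  rw [historySA_eq]; exact (meas_hist k).comap_le

lemma meas_cmean (P : Kernel (S × A) S) [IsMarkovKernel P]
    (R : Kernel (S × A) ℝ) [IsMarkovKernel R]
    (φ : S × A × ℝ × S → ℝ) (hφ : Measurable φ) : Measurable (cmean P R φ) := by
  have : StronglyMeasurable (cmean P R φ) :=
    StronglyMeasurable.integral_kernel_prod_right' (κ := R ×ₖ P)
      (f := fun z => φ (z.1.1, z.1.2, z.2.1, z.2.2))
      (Measurable.stronglyMeasurable (by fun_prop))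
  exact this.measurable

lemma cmean_bdd (P : Kernel (S × A) S) [IsMarkovKernel P]
    (R : Kernel (S × A) ℝ) [IsMarkovKernel R]
    (φ : S × A × ℝ × S → ℝ) (C : ℝ) (hC : ∀ x, |φ x| ≤ C) (p : S × A) :
    |cmean P R φ p| ≤ C := by
  have := norm_integral_le_of_norm_le_const (μ := (R ×ₖ P) p)
    (f := fun z => φ (p.1, p.2, z.1, z.2)) (C := C) (Filter.Eventually.of_forall fun z => hC _)
  simpa [cmean] using this

lemma int_of_bdd {Ω : Type*} {m0 : MeasurableSpace Ω} (μ : Measure Ω) [IsFiniteMeasure μ]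
    (g : Ω → ℝ) (hg : AEStronglyMeasurable g μ) (C : ℝ) (h : ∀ᵐ x ∂μ, |g x| ≤ C) :
    Integrable g μ := Integrable.of_bound hg C h

section
variable (P : Kernel (S × A) S) [IsMarkovKernel P]
    (R : Kernel (S × A) ℝ) [IsMarkovKernel R] (πb : Kernel S A) [IsMarkovKernel πb]
    (μb : Measure S) (Pb : Measure (ℕ → S × A × ℝ)) [IsProbabilityMeasure Pb]

lemma meas_Xt (k : ℕ) : Measurable (Xt (S := S) (A := A) k) := by unfold Xt; fun_prop

lemma cmean_sm (k : ℕ) (φ : S × A × ℝ × S → ℝ) (hφ : Measurable φ) :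
    StronglyMeasurable[currentSA (S := S) (A := A) k]
      fun ω : ℕ → S × A × ℝ => cmean P R φ ((ω k).1, (ω k).2.1) := by
  refine Measurable.stronglyMeasurable ?_
  exact (meas_cmean P R φ hφ).comp (comap_measurable _)

lemma markov_hist
    (hPb : ∀ n : ℕ, Pb.map (fun ω => fun i : Fin (n + 1) => ω i) = finLaw P R πb μb n)
    (k : ℕ) (φ : S × A × ℝ × S → ℝ) (hφ : Measurable φ) (C : ℝ) (hC : ∀ x, |φ x| ≤ C) :
    (fun ω => cmean P R φ ((ω k).1, (ω k).2.1)) =ᵐ[Pb]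
      Pb[fun ω => φ (Xt k ω) | historySA k] := by
  have hle := historySA_le (S := S) (A := A) k
  have hsm := cmean_sm (S := S) (A := A) P R k φ hφ
  have hmc : Measurable fun ω : ℕ → S × A × ℝ => cmean P R φ ((ω k).1, (ω k).2.1) :=
    (meas_cmean P R φ hφ).comp (by fun_prop)
  have hh := meas_hist (S := S) (A := A) k
  have hmX : Measurable fun ω : ℕ → S × A × ℝ => φ (Xt k ω) := hφ.comp (meas_Xt k)
  refine ae_eq_condExp_of_forall_setIntegral_eq hle ?_ ?_ ?_ ?_
  · exact int_of_bdd Pb _ hmX.aestronglyMeasurable C (Filter.Eventually.of_forall fun _ => hC _)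
  · intro s _ _
    exact (int_of_bdd Pb _ hmc.aestronglyMeasurable C
      (Filter.Eventually.of_forall fun _ => cmean_bdd P R φ C hC _)).integrableOn
  · intro s hs _
    rw [historySA_eq] at hs
    obtain ⟨T, hT, rfl⟩ := hs
    have hj : Measurable fun ω : ℕ → S × A × ℝ => (hist k ω, ((ω k).2.2, (ω (k + 1)).1)) := by
      fun_prop
    let Φ : (Fin (k + 1) → S × A) × ℝ × S → ℝ :=
      fun q => φ ((q.1 (Fin.last k)).1, (q.1 (Fin.last k)).2, q.2.1, q.2.2)
    have hΦ : Measurable Φ := by fun_prop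
    have : IsProbabilityMeasure (Pb.map (hist (S := S) (A := A) k)) :=
      Measure.isProbabilityMeasure_map hh.aemeasurable
    have e1 : ∫ ω in hist k ⁻¹' T, φ (Xt k ω) ∂Pb =
        ∫ q in T ×ˢ Set.univ, Φ q ∂((Pb.map (hist k)) ⊗ₘ (outKer P R k)) := by
      rw [← joint_law P R πb μb Pb hPb k,
        setIntegral_map (hT.prod MeasurableSet.univ) hΦ.aestronglyMeasurable hj.aemeasurable]
      congr 2
      ext ω
      simp
    rw [e1, Measure.setIntegral_compProd hT MeasurableSet.univ
      (int_of_bdd _ _ hΦ.aestronglyMeasurable C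
        (Filter.Eventually.of_forall fun _ => hC _)).integrableOn]
    have e2 : ∀ h : Fin (k + 1) → S × A, ∫ z in Set.univ, Φ (h, z) ∂(outKer P R k h) =
        cmean P R φ (h (Fin.last k)) := by
      intro h
      rw [Measure.restrict_univ]
      rfl
    simp_rw [e2]
    have hml : Measurable fun h : Fin (k + 1) → S × A => cmean P R φ (h (Fin.last k)) :=
      (meas_cmean P R φ hφ).comp (measurable_pi_apply (Fin.last k))
    rw [setIntegral_map hT hml.aestronglyMeasurable hh.aemeasurable]
    simp only [hist, Fin.val_last]
  · exact (hsm.mono (currentSA_le_historySA k)).aestronglyMeasurable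

lemma markov_cur
    (hPb : ∀ n : ℕ, Pb.map (fun ω => fun i : Fin (n + 1) => ω i) = finLaw P R πb μb n)
    (k : ℕ) (φ : S × A × ℝ × S → ℝ) (hφ : Measurable φ) (C : ℝ) (hC : ∀ x, |φ x| ≤ C) :
    (fun ω => cmean P R φ ((ω k).1, (ω k).2.1)) =ᵐ[Pb]
      Pb[fun ω => φ (Xt k ω) | currentSA k] := by
  have hle := historySA_le (S := S) (A := A) k
  have hle2 := currentSA_le_historySA (S := S) (A := A) k
  have hsm := cmean_sm (S := S) (A := A) P R k φ hφ
  have h1 := condExp_congr_ae (m := currentSA (S := S) (A := A) k)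
    (markov_hist P R πb μb Pb hPb k φ hφ C hC)
  have h2 := condExp_condExp_of_le (μ := Pb) (f := fun ω => φ (Xt k ω)) hle2 hle
  have hmc : Measurable fun ω : ℕ → S × A × ℝ => cmean P R φ ((ω k).1, (ω k).2.1) :=
    (meas_cmean P R φ hφ).comp (by fun_prop)
  rw [condExp_of_stronglyMeasurable (hle2.trans hle) hsm (int_of_bdd Pb _
    hmc.aestronglyMeasurable C
    (Filter.Eventually.of_forall fun _ => cmean_bdd P R φ C hC _))] at h1
  exact h1.trans h2

end

lemma condVar_eq {Ω : Type*} (m : MeasurableSpace Ω) {m0 : MeasurableSpace Ω} (hm : m ≤ m0)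
    (μ : Measure Ω) [IsProbabilityMeasure μ] (Z a b : Ω → ℝ) (hZ : Measurable Z) (C : ℝ)
    (hC : ∀ ω, |Z ω| ≤ C) (ha : a =ᵐ[μ] μ[Z | m]) (hb : b =ᵐ[μ] μ[fun ω => Z ω ^ 2 | m]) :
    _root_.condVar m μ Z =ᵐ[μ] fun ω => b ω - a ω ^ 2 := by
  have hL : MemLp Z 2 μ := MemLp.of_bound hZ.aestronglyMeasurable C
    (Filter.Eventually.of_forall hC)
  have h := ProbabilityTheory.condVar_ae_eq_condExp_sq_sub_sq_condExp hm hL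
  have h' : _root_.condVar m μ Z =ᵐ[μ] μ[fun ω => Z ω ^ 2 | m] - μ[Z | m] ^ 2 := h
  filter_upwards [h', ha, hb] with ω h1 h2 h3
  rw [h1, h2, h3]
  rfl

lemma abstract_ineq {Ω : Type*} (m : MeasurableSpace Ω) {m0 : MeasurableSpace Ω} (hm : m ≤ m0)
    (μ : Measure Ω) [IsProbabilityMeasure μ] (ν V : Ω → ℝ) (hν : Measurable ν) (C D : ℝ)
    (hC : ∀ ω, |ν ω| ≤ C) (hV : StronglyMeasurable[m] V) (hD : ∀ ω, |V ω| ≤ D)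
    (hV0 : 0 ≤ᵐ[μ] V) :
    ∫ ω, (μ[ν | m]) ω ^ 2 * V ω ∂μ ≤ ∫ ω, ν ω ^ 2 * V ω ∂μ := by
  obtain ⟨ω₀⟩ : Nonempty Ω := μ.nonempty_of_neZero
  have hC0 : 0 ≤ C := (abs_nonneg _).trans (hC ω₀)
  have hD0 : 0 ≤ D := (abs_nonneg _).trans (hD ω₀)
  set M := μ[ν | m] with hM
  have hMb : ∀ᵐ ω ∂μ, |M ω| ≤ C :=
    ae_bdd_abs_condExp_of_ae_bdd_abs (Filter.Eventually.of_forall hC)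
  have hMm : StronglyMeasurable[m] M := stronglyMeasurable_condExp
  have hMm0 := (hMm.mono hm).aestronglyMeasurable (μ := μ)
  have hVm0 := (hV.mono hm).aestronglyMeasurable (μ := μ)
  have hνi : Integrable ν μ := int_of_bdd μ ν hν.aestronglyMeasurable C
    (Filter.Eventually.of_forall hC)
  have i1 : Integrable (fun ω => ν ω ^ 2 * V ω) μ := by
    refine int_of_bdd μ _ ((hν.aestronglyMeasurable.pow 2).mul hVm0) (C ^ 2 * D)
      (Filter.Eventually.of_forall fun ω => ?_)
    rw [abs_mul, abs_pow]
    have := hC ω; have := hD ω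
    gcongr
  have i2 : Integrable (fun ω => M ω ^ 2 * V ω) μ := by
    refine int_of_bdd μ _ ((hMm0.pow 2).mul hVm0) (C ^ 2 * D) ?_
    filter_upwards [hMb] with ω h
    rw [abs_mul, abs_pow]
    have := hD ω
    gcongr
  have hb : ∀ᵐ ω ∂μ, ‖(M * V) ω‖ ≤ C * D := by
    filter_upwards [hMb] with ω h
    rw [Pi.mul_apply, Real.norm_eq_abs, abs_mul]
    have := hD ω
    gcongr
  have i3 : Integrable ((M * V) * ν) μ := hνi.bdd_mul (hMm0.mul hVm0) hb
  have key : ∫ ω, ((M * V) * ν) ω ∂μ = ∫ ω, M ω ^ 2 * V ω ∂μ := by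
    rw [← integral_condExp hm]
    refine integral_congr_ae ?_
    filter_upwards [condExp_mul_of_stronglyMeasurable_left (hMm.mul hV) i3 hνi] with ω h
    rw [h]
    simp only [Pi.mul_apply, ← hM]
    ring
  have pos : 0 ≤ ∫ ω, (ν ω - M ω) ^ 2 * V ω ∂μ := by
    refine integral_nonneg_of_ae ?_
    filter_upwards [hV0] with ω h
    exact mul_nonneg (sq_nonneg _) h
  have ex : ∫ ω, (ν ω - M ω) ^ 2 * V ω ∂μ =
      ∫ ω, ν ω ^ 2 * V ω ∂μ - 2 * ∫ ω, ((M * V) * ν) ω ∂μ + ∫ ω, M ω ^ 2 * V ω ∂μ := by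
    have i4 : Integrable (fun ω => ν ω ^ 2 * V ω - 2 * ((M * V) * ν) ω) μ :=
      i1.sub (i3.const_mul 2)
    rw [← integral_const_mul, ← integral_sub i1 (i3.const_mul 2), ← integral_add i4 i2]
    refine integral_congr_ae (Filter.Eventually.of_forall fun ω => ?_)
    simp only [Pi.mul_apply]
    ring
  rw [ex, key] at pos
  linarith

end Helpers

/-- term-by-term comparison of the Markov and non-Markov efficiency
bounds: `E[μ_k² Var(Z | σ(s_k,a_k))] ≤ E[ν_k² Var(Z | σ(s₀,a₀,…,s_k,a_k))]`. -/
theorem markov_vs_nonmarkov_efficiency_term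
    (P : Kernel (S × A) S) [IsMarkovKernel P]
    (Rmax : ℝ) (hRmax : 0 < Rmax)
    (R : Kernel (S × A) ℝ) [IsMarkovKernel R]
    (hR : ∀ p : S × A, R p (Set.Icc (0 : ℝ) Rmax)ᶜ = 0)
    (γ : ℝ) (hγ0 : 0 < γ) (hγ1 : γ < 1)
    (πe πb : Kernel S A) [IsMarkovKernel πe] [IsMarkovKernel πb]
    (μe μb : Measure S) [IsProbabilityMeasure μe] [IsProbabilityMeasure μb]
    -- the policy density ratio η, bounded
    (η : S → A → ℝ) (hη_meas : Measurable (Function.uncurry η))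
    (hη_bdd : ∃ C : ℝ, ∀ s a, 0 ≤ η s a ∧ η s a ≤ C)
    (hη : ∀ᵐ s ∂μb, πe s = (πb s).withDensity fun a => ENNReal.ofReal (η s a))
    -- the trajectory law P_b, characterized by its finite-dimensional prefixes
    (Pb : Measure (ℕ → S × A × ℝ)) [IsProbabilityMeasure Pb]
    (hPb : ∀ n : ℕ, Pb.map (fun ω => fun i : Fin (n + 1) => ω i) = finLaw P R πb μb n)
    -- a fixed time k, and a bounded measurable function f of one transition
    (k : ℕ)
    (f : S × A × ℝ × S → ℝ) (hf_meas : Measurable f) (hf_bdd : ∃ C : ℝ, ∀ x, |f x| ≤ C)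
    -- Z, the cumulative density ratio ν_k and the marginal density ratio μ_k
    (Z : (ℕ → S × A × ℝ) → ℝ) (hZ : ∀ ω, Z ω = f (Xt k ω))
    (ν : (ℕ → S × A × ℝ) → ℝ)
    (hν : ∀ ω, ν ω = ∏ j ∈ Finset.range (k + 1), η (ω j).1 (ω j).2.1)
    (μ : (ℕ → S × A × ℝ) → ℝ)
    (hμ : μ =ᵐ[Pb] Pb[ν | currentSA (S := S) (A := A) k]) :
    ∫ ω, (μ ω) ^ 2 * condVar (currentSA (S := S) (A := A) k) Pb Z ω ∂Pb ≤
      ∫ ω, (ν ω) ^ 2 * condVar (historySA (S := S) (A := A) k) Pb Z ω ∂Pb := by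
  obtain ⟨C, hC⟩ := hf_bdd
  obtain ⟨E, hE⟩ := hη_bdd
  obtain rfl : Z = fun ω => f (Xt k ω) := funext hZ
  obtain rfl : ν = fun ω => ∏ j ∈ Finset.range (k + 1), η (ω j).1 (ω j).2.1 := funext hν
  have hle := historySA_le (S := S) (A := A) k
  have hle2 := currentSA_le_historySA (S := S) (A := A) k
  have hZm : Measurable fun ω : ℕ → S × A × ℝ => f (Xt k ω) := hf_meas.comp (meas_Xt k)
  have hf2 : Measurable fun x => f x ^ 2 := hf_meas.pow_const 2
  have hC2 : ∀ x, |f x ^ 2| ≤ C ^ 2 := by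
    intro x
    rw [abs_pow]
    have := hC x
    gcongr
  let V : (ℕ → S × A × ℝ) → ℝ := fun ω =>
    cmean P R (fun x => f x ^ 2) ((ω k).1, (ω k).2.1) - cmean P R f ((ω k).1, (ω k).2.1) ^ 2
  have vH : _root_.condVar (historySA (S := S) (A := A) k) Pb (fun ω => f (Xt k ω)) =ᵐ[Pb] V :=
    condVar_eq _ hle Pb _ _ _ hZm C (fun _ => hC _)
      (markov_hist P R πb μb Pb hPb k f hf_meas C hC)
      (markov_hist P R πb μb Pb hPb k (fun x => f x ^ 2) hf2 (C ^ 2) hC2)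
  have vG : _root_.condVar (currentSA (S := S) (A := A) k) Pb (fun ω => f (Xt k ω)) =ᵐ[Pb] V :=
    condVar_eq _ (hle2.trans hle) Pb _ _ _ hZm C (fun _ => hC _)
      (markov_cur P R πb μb Pb hPb k f hf_meas C hC)
      (markov_cur P R πb μb Pb hPb k (fun x => f x ^ 2) hf2 (C ^ 2) hC2)
  have hV0 : 0 ≤ᵐ[Pb] V := by
    have h0 : 0 ≤ᵐ[Pb] _root_.condVar (historySA (S := S) (A := A) k) Pb
        (fun ω => f (Xt k ω)) :=
      condExp_nonneg (Filter.Eventually.of_forall fun ω => sq_nonneg _)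
    filter_upwards [h0, vH] with ω h1 h2
    rwa [← h2]
  have hVm : StronglyMeasurable[currentSA (S := S) (A := A) k] V :=
    (cmean_sm P R k _ hf2).sub ((cmean_sm P R k f hf_meas).pow 2)
  have hVb : ∀ ω, |V ω| ≤ C ^ 2 + C ^ 2 := by
    intro ω
    refine (abs_sub _ _).trans (add_le_add (cmean_bdd P R _ _ hC2 _) ?_)
    rw [abs_pow]
    have := cmean_bdd P R f C hC ((ω k).1, (ω k).2.1)
    gcongr
  have hνm : Measurable fun ω : ℕ → S × A × ℝ =>
      ∏ j ∈ Finset.range (k + 1), η (ω j).1 (ω j).2.1 := by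
    refine Finset.measurable_prod _ fun j _ => ?_
    exact hη_meas.comp (f := fun ω : ℕ → S × A × ℝ => ((ω j).1, (ω j).2.1)) (by fun_prop)
  have hνb : ∀ ω : ℕ → S × A × ℝ,
      |∏ j ∈ Finset.range (k + 1), η (ω j).1 (ω j).2.1| ≤ E ^ (k + 1) := by
    intro ω
    rw [Finset.abs_prod]
    refine (Finset.prod_le_prod (fun _ _ => abs_nonneg _) (g := fun _ => E) fun j _ => ?_).trans ?_
    · rw [abs_of_nonneg (hE _ _).1]
      exact (hE _ _).2
    · simp
  have main := abstract_ineq _ (hle2.trans hle) Pb _ V hνm _ _ hνb hVm hVb hV0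
  have l1 : ∫ ω, (μ ω) ^ 2 * _root_.condVar (currentSA (S := S) (A := A) k) Pb
      (fun ω => f (Xt k ω)) ω ∂Pb = ∫ ω, (Pb[fun ω => ∏ j ∈ Finset.range (k + 1),
        η (ω j).1 (ω j).2.1 | currentSA (S := S) (A := A) k]) ω ^ 2 * V ω ∂Pb := by
    refine integral_congr_ae ?_
    filter_upwards [hμ, vG] with ω h1 h2
    rw [h1, h2]
  have l2 : ∫ ω, (∏ j ∈ Finset.range (k + 1), η (ω j).1 (ω j).2.1) ^ 2 *
      _root_.condVar (historySA (S := S) (A := A) k) Pb (fun ω => f (Xt k ω)) ω ∂Pb =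
      ∫ ω, (∏ j ∈ Finset.range (k + 1), η (ω j).1 (ω j).2.1) ^ 2 * V ω ∂Pb := by
    refine integral_congr_ae ?_
    filter_upwards [vH] with ω h2
    rw [h2]
  rw [l1, l2]
  exact main

end
end
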